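/- Let G be a countably infinite discrete amenable group, X an infinite compact metrizable space, and α: G ↷ X a minimal free continuous action. If E_G(X) is compact and zero-dimensional in the weak* topology, then α has the small boundary property. -/

import Mathlib

open MeasureTheory Set Pointwise

variable (G X : Type*)

section Defs

variable [Group G] [MetricSpace X] [MeasurableSpace X] [MulAction G X]

/-- A Borel probability measure is `G`-invariant. -/
def InvariantMeasure (μ : ProbabilityMeasure X) : Prop :=
  ∀ g : G, MeasureTheory.Measure.map (fun x => g • x) (μ : Measure X) = (μ : Measure X)

/-- `M_G(X)`: the set of `G`-invariant Borel probability measures on `X`. -/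
def MG : Set (ProbabilityMeasure X) := {μ | InvariantMeasure G X μ}

/-- `E_G(X)`: the set of ergodic `G`-invariant Borel probability measures on `X`,
i.e. invariant measures giving every `G`-invariant Borel set measure `0` or `1`. -/
def EG : Set (ProbabilityMeasure X) :=
  {μ | InvariantMeasure G X μ ∧
    ∀ A : Set X, MeasurableSet A → (∀ g : G, g • A = A) → μ A = 0 ∨ μ A = 1}

/-- The action of `G` on `X` is free. -/
def FreeAction : Prop := ∀ (g : G) (x : X), g • x = x → g = 1

/-- The action of `G` on `X` is minimal: there is no proper nonempty closed invariant subset. -/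
def MinimalAction : Prop :=
  ∀ C : Set X, IsClosed C → (∀ g : G, g • C ⊆ C) → C = ∅ ∨ C = Set.univ

/-- The small boundary property. -/
def SmallBoundaryProperty : Prop :=
  ∀ (x : X) (U : Set X), IsOpen U → x ∈ U →
    ∃ V : Set X, IsOpen V ∧ x ∈ V ∧ V ⊆ U ∧ ∀ μ ∈ MG G X, μ (frontier V) = 0

/-- `S` is a `(K,δ)`-invariant finite subset of `G`. -/
def FolnerInv (K : Finset G) (δ : ℝ) (S : Finset G) : Prop :=
  (1 - δ) * (S.card : ℝ) ≤ ({s | s ∈ S ∧ ∀ k ∈ K, k * s ∈ S} : Set G).ncard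

/-- `G` is amenable: it admits `(K,δ)`-invariant nonempty finite subsets for all `K, δ`. -/
def AmenableGroup : Prop :=
  ∀ (K : Finset G) (δ : ℝ), 0 < δ → ∃ S : Finset G, S.Nonempty ∧ FolnerInv G K δ S

/-- `(S, V)` is a tower: the translates `s • V`, `s ∈ S`, are pairwise disjoint. -/
def IsTower (S : Finset G) (V : Set X) : Prop :=
  (S : Set G).Pairwise fun s t => Disjoint (s • V) (t • V)

/-- `F ≺_m O`: subordination with `m`-colored multiplicity. -/
def SubordinateM (m : ℕ) (F O : Set X) : Prop :=
  ∃ (n : ℕ) (U : Fin n → Set X) (s : Fin n → G) (c : Fin n → Fin (m + 1)),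
    (∀ k, IsOpen (U k)) ∧ F ⊆ ⋃ k, U k ∧ (∀ k, s k • U k ⊆ O) ∧
    ∀ k l, k ≠ l → c k = c l → Disjoint (s k • U k) (s l • U l)

/-- The action has dynamical `m`-comparison. -/
def HasMComparison (m : ℕ) : Prop :=
  ∀ F O : Set X, IsClosed F → IsOpen O →
    (∀ μ ∈ MG G X, μ F < μ O) → SubordinateM G X m F O

/-- The action is `m`-almost finite. -/
def MAlmostFinite (m : ℕ) : Prop :=
  ∀ (n : ℕ), 1 ≤ n → ∀ (K : Finset G) (δ : ℝ), 0 < δ →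
    ∃ (I : ℕ) (S : Fin I → Finset G) (V : Fin I → Set X) (c : Fin I → Fin (m + 1))
      (S' : Fin I → Finset G),
      (∀ i, IsOpen (V i)) ∧
      (∀ i, IsTower G X (S i) (closure (V i))) ∧
      (∀ i, FolnerInv G K δ (S i)) ∧
      (∀ i, ∀ s ∈ S i, Metric.diam (s • closure (V i)) < δ) ∧
      (∀ i j, i ≠ j → c i = c j →
        Disjoint ((S i : Set G) • closure (V i)) ((S j : Set G) • closure (V j))) ∧
      (∀ i, S' i ⊆ S i) ∧ (∀ i, ((S' i).card : ℝ) ≤ (S i).card / n) ∧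
      SubordinateM G X 0 (Set.univ \ ⋃ i, (S i : Set G) • V i) (⋃ i, (S' i : Set G) • V i)

end Defs

/-!
Choose a summable family of positive weights `p` on `G` with total mass `1`. For every ergodic `μ`,
the mean ergodic theorem for the contraction `T f = ∑ p g • f (g • ·)` shows that the Cesàro
averages of `f` under `T` converge in `L¹(μ)` to `∫ f dμ`: strict convexity forces a `T`-fixed
function to be `G`-fixed, hence constant. Along the dyadic Cesàro averages the `L¹(μ)`-distance to
`∫ f dμ` decreases, so Dini's theorem makes the convergence uniform over the compact set of ergodic
measures. By Stone–Weierstrass, *every* continuous function `t` on the space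
of ergodic measures is then a uniform `L¹`-limit of continuous functions `v` on `X`, in the sense
that `v ≈ t μ` in `L¹(μ)`.

Given `F ⊆ U` with Urysohn function `f`, each ergodic `μ` has levels `t` for which `{f ≈ t}` is
`μ`-small, and zero-dimensionality lets such a level be chosen locally constantly in `μ`. Replacing
`t μ` by an approximating function `v` on `X`, the collar `{f ≈ v}` is small for all ergodic
measures at once. Shrinking collars repeatedly yields a neighbourhood whose boundary is null for
every ergodic measure. Finally the measure of a closed set, being affine and upper semicontinuous
on `M_G(X)`, attains its maximum at an extreme point, that is, at an ergodic measure.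
-/

section WeightedSums

variable {ι E : Type*} [NormedAddCommGroup E] {p : ι → ℝ}

theorem exists_pos_hasSum_one (ι : Type*) [Countable ι] [Nonempty ι] :
    ∃ p : ι → ℝ, (∀ i, 0 < p i) ∧ HasSum p 1 := by
  obtain ⟨q, hqpos, c, hqc, -⟩ := NNReal.exists_pos_sum_of_countable one_ne_zero ι
  have hq : HasSum (fun i => (q i : ℝ)) c := NNReal.hasSum_coe.2 hqc
  have hc : (0 : ℝ) < c :=
    hq.tsum_eq ▸ hq.summable.tsum_pos (fun i => (q i).2) (Classical.arbitrary ι) (hqpos _)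
  exact ⟨fun i => q i / c, fun i => div_pos (hqpos i) hc, by simpa [hc.ne'] using hq.div_const c⟩

section

variable [NormedSpace ℝ E]

theorem hasSum_smul_mem_of_convex_of_isClosed {K : Set E} (hconv : Convex ℝ K)
    (hclosed : IsClosed K) {w : ι → E} (hw : ∀ i, w i ∈ K) {v : E} (hp : ∀ i, 0 ≤ p i)
    (hp1 : HasSum p 1) (hv : HasSum (fun i => p i • w i) v) : v ∈ K := by
  have hlim : Filter.Tendsto (fun s : Finset ι => s.centerMass p w) Filter.atTop (nhds v) := by
    simpa [Finset.centerMass] using (hp1.inv₀ one_ne_zero).smul hv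
  refine hclosed.mem_of_tendsto hlim ?_
  filter_upwards [hp1.eventually_const_lt one_pos] with s hs
  exact hconv.centerMass_mem (fun i _ => hp i) hs fun i _ => hw i

theorem exists_forall_hasSum_smul_apply [CompleteSpace E] (hp : ∀ i, 0 ≤ p i) (hp1 : Summable p)
    {U : ι → E →L[ℝ] E} (hU : ∀ i, ‖U i‖ ≤ 1) :
    ∃ T : E →L[ℝ] E, ∀ x, HasSum (fun i => p i • U i x) (T x) := by
  have hle (i : ι) : ‖p i • U i‖ ≤ p i := by
    rw [norm_smul, Real.norm_of_nonneg (hp i)]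
    exact mul_le_of_le_one_right (hp i) (hU i)
  exact ⟨_, fun x => (Summable.of_norm_bounded hp1 hle).hasSum.mapL
    (ContinuousLinearMap.apply ℝ E x)⟩

end

theorem eq_of_hasSum_smul_of_norm_le [InnerProductSpace ℝ E] (hp : ∀ i, 0 < p i)
    (hp1 : HasSum p 1) {w : ι → E} {v : E} (hw : ∀ i, ‖w i‖ ≤ ‖v‖)
    (hv : HasSum (fun i => p i • w i) v) (i : ι) : w i = v := by
  have hinner_le (j : ι) : inner ℝ v (w j) ≤ ‖v‖ ^ 2 := by
    nlinarith [real_inner_le_norm v (w j), hw j, norm_nonneg v]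
  have hzero : HasSum (fun j => p j * (‖v‖ ^ 2 - inner ℝ v (w j))) 0 := by
    have hinner := (hp1.mul_right (‖v‖ ^ 2)).sub (hv.mapL (innerSL ℝ v))
    simpa [inner_smul_right, mul_sub] using hinner
  have hterm := congrFun ((hasSum_zero_iff_of_nonneg fun j =>
    mul_nonneg (hp j).le (sub_nonneg.2 (hinner_le j))).1 hzero) i
  have hinner_eq : inner ℝ v (w i) = ‖v‖ ^ 2 := by
    simpa [(hp i).ne', sub_eq_zero, eq_comm] using hterm
  have hdist : ‖w i - v‖ ^ 2 ≤ 0 := by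
    rw [norm_sub_sq_real, real_inner_comm, hinner_eq]
    nlinarith [hw i, norm_nonneg (w i)]
  simpa [sub_eq_zero] using hdist

theorem exists_tendsto_birkhoffAverage_of_forall_hasSum [InnerProductSpace ℝ E] [CompleteSpace E]
    (hp : ∀ i, 0 < p i) (hp1 : HasSum p 1) {U : ι → E →L[ℝ] E} (hU : ∀ i, ‖U i‖ ≤ 1)
    {T : E →L[ℝ] E} (hT : ∀ x, HasSum (fun i => p i • U i x) (T x)) (x : E) :
    ∃ z, Filter.Tendsto (birkhoffAverage ℝ T id · x) Filter.atTop (nhds z) ∧ ∀ i, U i z = z := by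
  have hUle (i : ι) (y : E) : ‖U i y‖ ≤ ‖y‖ := by simpa using (U i).le_of_opNorm_le (hU i) y
  have hnorm : ‖T‖ ≤ 1 := T.opNorm_le_bound zero_le_one fun y =>
    (hT y).norm_le_of_bounded (hp1.mul_right ‖y‖) fun i => by
      rw [norm_smul, Real.norm_of_nonneg (hp i).le]
      exact mul_le_mul_of_nonneg_left (hUle i y) (hp i).le
  refine ⟨_, T.tendsto_birkhoffAverage_orthogonalProjection hnorm x, ?_⟩
  have hfix : ∀ z, T z = z → ∀ i, U i z = z := fun z hz =>
    eq_of_hasSum_smul_of_norm_le hp hp1 (fun i => hUle i z) (by simpa only [hz] using hT z)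
  exact hfix _ ((T.eqLocus (1 : E →L[ℝ] E)).orthogonalProjectionOnto x).2

end WeightedSums

theorem birkhoffAverage_two_mul {R α M : Type*} [DivisionSemiring R] [AddCommMonoid M]
    [Module R M] (f : α → α) (g : α → M) (n : ℕ) (x : α) :
    birkhoffAverage R f g (2 * n) x =
      (2⁻¹ : R) • birkhoffAverage R f g n x + (2⁻¹ : R) • birkhoffAverage R f g n (f^[n] x) := by
  have hinv : ((2 * n : ℕ) : R)⁻¹ = 2⁻¹ * (n : R)⁻¹ := by
    rw [Nat.cast_mul, mul_inv_rev, Nat.cast_ofNat,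
      ((Nat.cast_commute n (2 : R)).inv_left₀.inv_right₀).eq]
  rw [birkhoffAverage, hinv, two_mul, birkhoffSum_add, smul_add, mul_smul, mul_smul]
  rfl

theorem map_birkhoffAverage_id {R M N F : Type*} [DivisionSemiring R] [AddCommMonoid M]
    [Module R M] [AddCommMonoid N] [Module R N] [FunLike F M N] [AddMonoidHomClass F M N] (S : F)
    {T : M → M} {T' : N → N} (h : Function.Semiconj S T T') (n : ℕ) (x : M) :
    S (birkhoffAverage R T id n x) = birkhoffAverage R T' id n (S x) := by
  rw [map_birkhoffAverage R R]
  simp only [birkhoffAverage, birkhoffSum, Function.comp_apply, id_eq, (h.iterate_right _).eq]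

section Ergodic

variable {G α β : Type*} [MeasurableSpace α] {μ : Measure α}

theorem exists_ae_eq_const_of_forall_smul_ae_eq [SMul G α] [ErgodicSMul G α μ]
    [MeasurableSpace β] [Nonempty β] [HasCountableSeparatingOn β MeasurableSet univ]
    {f : α → β} (hf : NullMeasurable f μ)
    (hinv : ∀ g : G, (fun x => f (g • x)) =ᵐ[μ] f) :
    ∃ c, f =ᵐ[μ] Function.const α c :=
  Filter.exists_eventuallyEq_const_of_forall_separating MeasurableSet fun s hs =>
    Filter.eventuallyConst_pred.1
      (aeconst_of_forall_preimage_smul_ae_eq G (hf hs) fun g => (hinv g).preimage s)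

theorem exists_eq_Lp_const_of_forall_smul_eq [SMul G α] [MeasurableConstSMul G α]
    [ErgodicSMul G α μ] [IsFiniteMeasure μ] [NormedAddCommGroup β] {p : ENNReal}
    [SecondCountableTopology β] [MeasurableSpace β] [BorelSpace β]
    {f : Lp β p μ} (hinv : ∀ g : Gᵈᵐᵃ, g • f = f) : ∃ c, f = Lp.const p μ c := by
  obtain ⟨c, hc⟩ := exists_ae_eq_const_of_forall_smul_ae_eq (G := G)
    (Lp.aestronglyMeasurable f).aemeasurable.nullMeasurable fun g => by
      have := DomMulAct.smul_Lp_ae_eq (DomMulAct.mk g) f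
      rw [hinv] at this
      exact this.symm
  exact ⟨c, Lp.ext (hc.trans (Lp.coeFn_const p μ c).symm)⟩

end Ergodic

section EG

variable {G X : Type*} [Group G] [MetricSpace X] [MeasurableSpace X] [BorelSpace X]
  [MulAction G X] [ContinuousConstSMul G X] {μ : ProbabilityMeasure X}

theorem smulInvariantMeasure_of_mem_MG (hμ : μ ∈ MG G X) :
    SMulInvariantMeasure G X (μ : Measure X) :=
  ((smulInvariantMeasure_tfae G (μ : Measure X)).out 5 0).1 hμ

theorem ergodicSMul_of_mem_EG [Countable G] (hμ : μ ∈ EG G X) :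
    ErgodicSMul G X (μ : Measure X) := by
  have := smulInvariantMeasure_of_mem_MG hμ.1
  refine ⟨fun {s} hs hinv => ?_⟩
  let t : Set X := ⋂ g : G, (g • ·) ⁻¹' s
  have hts : t =ᵐ[(μ : Measure X)] s := by
    simpa only [iInter_const] using Filter.EventuallyEq.countable_iInter hinv
  have ht : MeasurableSet t := MeasurableSet.iInter fun g => measurable_const_smul g hs
  have htinv (g : G) : g • t = t := by
    ext x
    simp only [t, mem_smul_set_iff_inv_smul_mem, mem_iInter, mem_preimage, smul_smul]
    exact ⟨fun h k => by simpa using h (k * g), fun h k => h _⟩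
  refine Filter.EventuallyConst.congr ?_ hts
  rw [Filter.eventuallyConst_set']
  rcases hμ.2 t ht htinv with h | h
  · exact .inl (ae_eq_empty.2 ((μ.null_iff_toMeasure_null t).1 h))
  · refine .inr (ae_eq_univ.2 ((prob_compl_eq_zero_iff ht).2 ?_))
    rw [← ProbabilityMeasure.ennreal_coeFn_eq_coeFn_toMeasure, h, ENNReal.coe_one]

end EG

section L1Seminorm

variable {X : Type*} [TopologicalSpace X] [CompactSpace X] [MeasurableSpace X] [BorelSpace X]

/-- The `L¹(μ)`-seminorm on the space of continuous functions. -/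
noncomputable def l1Seminorm (μ : Measure X) [IsFiniteMeasure μ] : Seminorm ℝ C(X, ℝ) :=
  (normSeminorm ℝ (Lp ℝ 1 μ)).comp (ContinuousMap.toLp 1 μ ℝ).toLinearMap

theorem integrable_continuousMap (μ : Measure X) [IsFiniteMeasure μ] (f : C(X, ℝ)) :
    Integrable f μ :=
  f.continuous.integrable_of_hasCompactSupport (.of_compactSpace f)

section

variable (μ : Measure X) [IsFiniteMeasure μ] (f g : C(X, ℝ))

theorem continuous_l1Seminorm : Continuous (l1Seminorm μ) :=
  continuous_norm.comp (ContinuousMap.toLp 1 μ ℝ).continuous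

theorem l1Seminorm_apply : l1Seminorm μ f = ∫ x, |f x| ∂μ := by
  change ‖ContinuousMap.toLp 1 μ ℝ f‖ = _
  rw [L1.norm_eq_integral_norm]
  exact integral_congr_ae ((ContinuousMap.coeFn_toLp μ f).fun_comp norm)

theorem l1Seminorm_mul_le : l1Seminorm μ (f * g) ≤ ‖f‖ * l1Seminorm μ g := by
  simp only [l1Seminorm_apply, ← integral_const_mul]
  refine integral_mono (integrable_continuousMap μ |f * g|)
    ((integrable_continuousMap μ |g|).const_mul _) fun x => ?_
  simp only [ContinuousMap.mul_apply, abs_mul]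
  gcongr
  exact f.norm_coe_le_norm x

theorem mul_measureReal_le_abs_le_l1Seminorm (η : ℝ) :
    η * μ.real {x | η ≤ |f x|} ≤ l1Seminorm μ f := by
  rw [l1Seminorm_apply]
  exact mul_meas_ge_le_integral_of_nonneg (.of_forall fun _ => abs_nonneg _)
    (integrable_continuousMap μ |f|) η

end

theorem l1Seminorm_le_norm_toLp (μ : Measure X) [IsProbabilityMeasure μ] (p : ENNReal)
    [Fact (1 ≤ p)] (f : C(X, ℝ)) : l1Seminorm μ f ≤ ‖ContinuousMap.toLp p μ ℝ f‖ := by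
  change ‖ContinuousMap.toLp 1 μ ℝ f‖ ≤ _
  rw [Lp.norm_def, Lp.norm_def]
  refine ENNReal.toReal_mono (Lp.eLpNorm_ne_top _) ?_
  rw [eLpNorm_congr_ae (ContinuousMap.coeFn_toLp μ f),
    eLpNorm_congr_ae (ContinuousMap.coeFn_toLp μ f)]
  exact eLpNorm_le_eLpNorm_of_exponent_le Fact.out f.continuous.aestronglyMeasurable

theorem l1Seminorm_algebraMap (μ : Measure X) [IsProbabilityMeasure μ] (c : ℝ) :
    l1Seminorm μ (algebraMap ℝ C(X, ℝ) c) = |c| := by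
  simp [l1Seminorm_apply]

theorem l1Seminorm_sub_algebraMap_le (μ : Measure X) [IsProbabilityMeasure μ] (f : C(X, ℝ))
    (a b : ℝ) :
    l1Seminorm μ (f - algebraMap ℝ _ a) ≤ l1Seminorm μ (f - algebraMap ℝ _ b) + |b - a| := by
  rw [← l1Seminorm_algebraMap μ, map_sub (algebraMap ℝ C(X, ℝ))]
  simpa only [sub_add_sub_cancel] using
    map_add_le_add (l1Seminorm μ) (f - algebraMap ℝ _ b) (algebraMap ℝ _ b - algebraMap ℝ _ a)

theorem lipschitzWith_l1Seminorm_sub_algebraMap (μ : Measure X) [IsProbabilityMeasure μ]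
    (f : C(X, ℝ)) : LipschitzWith 1 fun c : ℝ => l1Seminorm μ (f - algebraMap ℝ _ c) :=
  LipschitzWith.of_le_add fun a b => by
    rw [dist_comm, Real.dist_eq]
    exact l1Seminorm_sub_algebraMap_le μ f a b

theorem abs_sub_integral_le_l1Seminorm (μ : Measure X) [IsProbabilityMeasure μ] (f : C(X, ℝ))
    (c : ℝ) : |c - ∫ x, f x ∂μ| ≤ l1Seminorm μ (f - algebraMap ℝ _ c) := by
  calc |c - ∫ x, f x ∂μ| = |∫ x, (f - algebraMap ℝ C(X, ℝ) c) x ∂μ| := by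
        simp [abs_sub_comm c, integral_sub (integrable_continuousMap μ f)]
    _ ≤ l1Seminorm μ (f - algebraMap ℝ _ c) := by
        rw [l1Seminorm_apply]
        exact abs_integral_le_integral_abs

theorem continuous_integral_continuousMap (μ : Measure X) [IsFiniteMeasure μ] :
    Continuous fun f : C(X, ℝ) => ∫ x, f x ∂μ := by
  have hI : (fun f : C(X, ℝ) => ∫ x, f x ∂μ) = integral μ ∘ (⇑) ∘ ContinuousMap.toLp 1 μ ℝ :=
    funext fun f => (integral_congr_ae (ContinuousMap.coeFn_toLp μ f)).symm
  exact hI ▸ continuous_integral.comp (ContinuousMap.toLp 1 μ ℝ).continuous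

theorem continuous_l1Seminorm_measure (f : C(X, ℝ)) :
    Continuous fun μ : ProbabilityMeasure X => l1Seminorm (μ : Measure X) f := by
  simp only [l1Seminorm_apply]
  exact ProbabilityMeasure.continuous_integral_continuousMap |f|

theorem continuous_prod_l1Seminorm_sub_algebraMap (f : C(X, ℝ)) :
    Continuous fun q : ProbabilityMeasure X × ℝ =>
      l1Seminorm (q.1 : Measure X) (f - algebraMap ℝ _ q.2) := by
  refine continuous_prod_of_continuous_lipschitzWith' _ 1 (fun μ => ?_) fun c => ?_
  · exact lipschitzWith_l1Seminorm_sub_algebraMap (μ : Measure X) f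
  · exact continuous_l1Seminorm_measure (f - algebraMap ℝ _ c)

theorem continuous_l1Seminorm_sub_integral (f u : C(X, ℝ)) :
    Continuous fun μ : ProbabilityMeasure X =>
      l1Seminorm (μ : Measure X) (u - algebraMap ℝ _ (∫ x, f x ∂(μ : Measure X))) := by
  have hf := ProbabilityMeasure.continuous_integral_continuousMap f
  exact (continuous_prod_l1Seminorm_sub_algebraMap u).comp₂ continuous_id hf

end L1Seminorm

section OrbitHull

variable {G X : Type*} [Group G] [TopologicalSpace X] [MulAction G X] [ContinuousConstSMul G X]

/-- The translate `x ↦ f (g • x)` of a continuous function `f`, as a continuous linear map. -/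
def smulPullback (g : G) : C(X, ℝ) →L[ℝ] C(X, ℝ) :=
  ContinuousMap.compCLM ℝ ℝ ⟨(g • ·), continuous_const_smul g⟩

theorem smulPullback_apply (g : G) (f : C(X, ℝ)) (x : X) : smulPullback g f x = f (g • x) :=
  rfl

theorem smulPullback_smulPullback (g h : G) (f : C(X, ℝ)) :
    smulPullback g (smulPullback h f) = smulPullback (h * g) f := by
  ext x
  simp only [smulPullback_apply, mul_smul]

variable (G) in
/-- The closed convex hull of the translates of a continuous function: the averages of `f` with
respect to probability weights on `G`. -/
def orbitHull (f : C(X, ℝ)) : Set C(X, ℝ) :=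
  closedConvexHull ℝ (range fun g : G => smulPullback g f)

theorem smulPullback_mem_orbitHull (g : G) (f : C(X, ℝ)) : smulPullback g f ∈ orbitHull G f :=
  subset_closedConvexHull (mem_range_self g)

theorem mem_orbitHull_self (f : C(X, ℝ)) : f ∈ orbitHull G f := by
  convert smulPullback_mem_orbitHull (1 : G) f
  ext x
  rw [smulPullback_apply, one_smul]

theorem mapsTo_smulPullback_orbitHull (g : G) (f : C(X, ℝ)) :
    MapsTo (smulPullback g) (orbitHull G f) (orbitHull G f) := by
  refine closedConvexHull_min (range_subset_iff.2 fun h => ?_)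
    (convex_closedConvexHull.linear_preimage (smulPullback g).toLinearMap)
    (isClosed_closedConvexHull.preimage (smulPullback g).continuous)
  change smulPullback g (smulPullback h f) ∈ orbitHull G f
  rw [smulPullback_smulPullback]
  exact smulPullback_mem_orbitHull _ f

theorem orbitHull_subset {u f : C(X, ℝ)} (hu : u ∈ orbitHull G f) :
    orbitHull G u ⊆ orbitHull G f :=
  closedConvexHull_min (range_subset_iff.2 fun g => mapsTo_smulPullback_orbitHull g f hu)
    convex_closedConvexHull isClosed_closedConvexHull

theorem iterate_mem_orbitHull {T : C(X, ℝ) → C(X, ℝ)} (hT : ∀ f, T f ∈ orbitHull G f) (n : ℕ)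
    (f : C(X, ℝ)) : T^[n] f ∈ orbitHull G f := by
  have hmaps : MapsTo T (orbitHull G f) (orbitHull G f) := fun u hu => orbitHull_subset hu (hT u)
  exact hmaps.iterate n (mem_orbitHull_self f)

theorem birkhoffAverage_two_mul_mem_orbitHull {T : C(X, ℝ) →ₗ[ℝ] C(X, ℝ)}
    (hT : ∀ f, T f ∈ orbitHull G f) (n : ℕ) (f : C(X, ℝ)) :
    birkhoffAverage ℝ T id (2 * n) f ∈ orbitHull G (birkhoffAverage ℝ T id n f) := by
  have hcomm : birkhoffAverage ℝ T id n (T^[n] f) = T^[n] (birkhoffAverage ℝ T id n f) := by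
    rw [← Module.End.coe_pow]
    exact (map_birkhoffAverage_id (T ^ n) (fun v => by
      simp only [← Module.End.mul_apply, (Commute.self_pow T n).eq]) n f).symm
  rw [birkhoffAverage_two_mul, hcomm]
  exact convex_closedConvexHull (mem_orbitHull_self _) (iterate_mem_orbitHull hT n _)
    (by norm_num) (by norm_num) (by norm_num)

variable [CompactSpace X] [MeasurableSpace X] [BorelSpace X] {μ : Measure X}
  [SMulInvariantMeasure G X μ] {u f : C(X, ℝ)}

theorem l1Seminorm_sub_algebraMap_le_of_mem_orbitHull [IsFiniteMeasure μ]
    (hu : u ∈ orbitHull G f) (c : ℝ) :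
    l1Seminorm μ (u - algebraMap ℝ _ c) ≤ l1Seminorm μ (f - algebraMap ℝ _ c) := by
  have hball : orbitHull G f ⊆
      (l1Seminorm μ).closedBall (algebraMap ℝ _ c) (l1Seminorm μ (f - algebraMap ℝ _ c)) := by
    refine closedConvexHull_min (range_subset_iff.2 fun g => ?_)
      ((l1Seminorm μ).convex_closedBall _ _) ?_
    · rw [Seminorm.mem_closedBall, l1Seminorm_apply, l1Seminorm_apply]
      exact (integral_smul_eq_self (μ := μ) (fun x => |f x - c|) (g := g)).le
    · exact isClosed_le ((continuous_l1Seminorm μ).comp (continuous_id.sub continuous_const))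
        continuous_const
  exact (Seminorm.mem_closedBall _).1 (hball hu)

theorem integral_eq_of_mem_orbitHull [IsFiniteMeasure μ] (hu : u ∈ orbitHull G f) :
    ∫ x, u x ∂μ = ∫ x, f x ∂μ := by
  let I : C(X, ℝ) →ₗ[ℝ] ℝ :=
    { toFun := fun v => ∫ x, v x ∂μ
      map_add' := fun v w =>
        integral_add (integrable_continuousMap μ v) (integrable_continuousMap μ w)
      map_smul' := fun c v => integral_const_mul c v }
  refine closedConvexHull_min (range_subset_iff.2 fun g => ?_) (convex_hyperplane I.isLinear _)
    (isClosed_eq (continuous_integral_continuousMap μ) continuous_const) hu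
  exact integral_smul_eq_self (μ := μ) f (g := g)

end OrbitHull

section RandomWalk

variable {G X : Type*} [Group G] [TopologicalSpace X] [CompactSpace X] [MulAction G X]
  [ContinuousConstSMul G X] {p : G → ℝ}

theorem mem_orbitHull_of_hasSum (hp : ∀ g, 0 ≤ p g) (hp1 : HasSum p 1) {f u : C(X, ℝ)}
    (hu : HasSum (fun g => p g • smulPullback g f) u) : u ∈ orbitHull G f :=
  hasSum_smul_mem_of_convex_of_isClosed convex_closedConvexHull isClosed_closedConvexHull
    (smulPullback_mem_orbitHull · f) hp hp1 hu

theorem norm_smulPullback_le (g : G) : ‖(smulPullback g : C(X, ℝ) →L[ℝ] C(X, ℝ))‖ ≤ 1 :=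
  ContinuousLinearMap.opNorm_le_bound _ zero_le_one fun f => by
    rw [one_mul]
    exact (ContinuousMap.norm_le _ (norm_nonneg f)).2 fun x => f.norm_coe_le_norm (g • x)

variable [MeasurableSpace X] [BorelSpace X]

theorem exists_tendsto_l1Seminorm_birkhoffAverage_sub (hp : ∀ g, 0 < p g) (hp1 : HasSum p 1)
    {T : C(X, ℝ) →L[ℝ] C(X, ℝ)} (hT : ∀ f, HasSum (fun g => p g • smulPullback g f) (T f))
    (μ : Measure X) [IsProbabilityMeasure μ] [ErgodicSMul G X μ] (f : C(X, ℝ)) :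
    ∃ c, Filter.Tendsto
      (fun n => l1Seminorm μ (birkhoffAverage ℝ T id n f - algebraMap ℝ _ c))
      Filter.atTop (nhds 0) := by
  let J : C(X, ℝ) →L[ℝ] Lp ℝ 2 μ := ContinuousMap.toLp 2 μ ℝ
  let U (g : G) : Lp ℝ 2 μ →L[ℝ] Lp ℝ 2 μ :=
    (Lp.compMeasurePreservingₗᵢ ℝ (g • ·)
      (measurePreserving_smul g μ)).toContinuousLinearMap
  have hU (g : G) : ‖U g‖ ≤ 1 := LinearIsometry.norm_toContinuousLinearMap_le _
  obtain ⟨V, hV⟩ := exists_forall_hasSum_smul_apply (fun g => (hp g).le) hp1.summable hU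
  have hJT : Function.Semiconj J T V := fun u => by
    refine HasSum.unique ?_ (hV (J u))
    have hmap := (hT u).mapL J
    simp only [map_smul] at hmap
    exact hmap
  obtain ⟨z, hz, hfix⟩ := exists_tendsto_birkhoffAverage_of_forall_hasSum hp hp1 hU hV (J f)
  obtain ⟨c, rfl⟩ := exists_eq_Lp_const_of_forall_smul_eq (G := G) (f := z) fun g => hfix _
  refine ⟨c, squeeze_zero (fun n => apply_nonneg _ _)
    (fun n => l1Seminorm_le_norm_toLp μ 2 _) ?_⟩
  have hlim := tendsto_iff_norm_sub_tendsto_zero.1 hz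
  simp only [← map_birkhoffAverage_id J hJT] at hlim
  simp only [map_sub]
  exact hlim

variable (G) in
theorem exists_seq_orbitHull_tendsto_l1Seminorm_sub_integral [Countable G] (f : C(X, ℝ)) :
    ∃ u : ℕ → C(X, ℝ), (∀ k, u (k + 1) ∈ orbitHull G (u k)) ∧
      ∀ (μ : Measure X) [IsProbabilityMeasure μ] [ErgodicSMul G X μ], Filter.Tendsto
        (fun k => l1Seminorm μ (u k - algebraMap ℝ _ (∫ x, f x ∂μ))) Filter.atTop (nhds 0) := by
  obtain ⟨p, hp, hp1⟩ := exists_pos_hasSum_one G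
  obtain ⟨T, hT⟩ := exists_forall_hasSum_smul_apply (fun g => (hp g).le) hp1.summable
    fun g => norm_smulPullback_le (X := X) g
  let u (k : ℕ) : C(X, ℝ) := birkhoffAverage ℝ T id (2 ^ k) f
  have hu (k : ℕ) : u (k + 1) ∈ orbitHull G (u k) := by
    simp only [u, pow_succ']
    exact birkhoffAverage_two_mul_mem_orbitHull (T := T.toLinearMap)
      (fun v => mem_orbitHull_of_hasSum (fun g => (hp g).le) hp1 (hT v)) _ f
  refine ⟨u, hu, fun μ _ _ => ?_⟩
  have hint (k : ℕ) : ∫ x, u k x ∂μ = ∫ x, f x ∂μ := by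
    induction k with
    | zero => simp [u]
    | succ k ih => rw [integral_eq_of_mem_orbitHull (hu k), ih]
  obtain ⟨c, hc⟩ := exists_tendsto_l1Seminorm_birkhoffAverage_sub hp hp1 hT μ f
  have hlim : Filter.Tendsto (fun k => l1Seminorm μ (u k - algebraMap ℝ _ c)) Filter.atTop
      (nhds 0) := hc.comp (tendsto_pow_atTop_atTop_of_one_lt one_lt_two)
  have hdist : |c - ∫ x, f x ∂μ| ≤ 0 :=
    ge_of_tendsto' hlim fun k => hint k ▸ abs_sub_integral_le_l1Seminorm μ (u k) c
  rwa [← sub_eq_zero.1 (abs_nonpos_iff.1 hdist)]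

theorem exists_forall_l1Seminorm_sub_integral_lt [Countable G] {E : Set (ProbabilityMeasure X)}
    (hE : IsCompact E) (herg : ∀ μ ∈ E, ErgodicSMul G X (μ : Measure X)) (f : C(X, ℝ)) {ε : ℝ}
    (hε : 0 < ε) :
    ∃ u : C(X, ℝ), ∀ μ ∈ E,
      l1Seminorm (μ : Measure X) (u - algebraMap ℝ _ (∫ x, f x ∂(μ : Measure X))) < ε := by
  obtain ⟨u, hu, hlim⟩ := exists_seq_orbitHull_tendsto_l1Seminorm_sub_integral G f
  have hunif := Antitone.tendstoUniformlyOn_of_forall_tendsto hE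
    (fun k => (continuous_l1Seminorm_sub_integral f (u k)).continuousOn)
    (fun μ hμ => antitone_nat_of_succ_le fun k =>
      have := herg μ hμ
      l1Seminorm_sub_algebraMap_le_of_mem_orbitHull (hu k) _)
    continuousOn_const fun μ hμ =>
      have := herg μ hμ
      hlim (μ : Measure X)
  obtain ⟨k, hk⟩ := (Metric.tendstoUniformlyOn_iff.1 hunif ε hε).exists
  exact ⟨u k, fun μ hμ => by simpa [abs_of_nonneg] using hk μ hμ⟩

end RandomWalk

section L1Approximable

variable {X : Type*} [TopologicalSpace X] [CompactSpace X] [MeasurableSpace X] [BorelSpace X]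
  {E : Set (ProbabilityMeasure X)}

/-- A function `h` on a set `E` of probability measures is `L¹`-approximable if continuous functions
on the base space come arbitrarily close, in `L¹(μ)` and uniformly in `μ ∈ E`, to the constants
`h μ`. -/
def IsL1Approximable (h : E → ℝ) : Prop :=
  ∀ ⦃ε : ℝ⦄, 0 < ε → ∃ v : C(X, ℝ), ∀ μ : E,
    l1Seminorm (μ : Measure X) (v - algebraMap ℝ _ (h μ)) < ε

namespace IsL1Approximable

theorem const (c : ℝ) : IsL1Approximable fun _ : E => c :=
  fun _ hε => ⟨algebraMap ℝ _ c, fun _ => by simpa using hε⟩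

theorem add {h k : E → ℝ} (hh : IsL1Approximable h) (hk : IsL1Approximable k) :
    IsL1Approximable (h + k) := by
  intro ε hε
  obtain ⟨v, hv⟩ := hh (half_pos hε)
  obtain ⟨w, hw⟩ := hk (half_pos hε)
  refine ⟨v + w, fun μ => ?_⟩
  rw [Pi.add_apply, map_add, add_sub_add_comm, ← add_halves ε]
  exact (map_add_le_add _ _ _).trans_lt (add_lt_add (hv μ) (hw μ))

theorem mul {h k : E → ℝ} (hh : IsL1Approximable h) (hk : IsL1Approximable k) {K : ℝ}
    (hK : ∀ μ, |k μ| ≤ K) : IsL1Approximable (h * k) := by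
  intro ε hε
  obtain ⟨v, hv⟩ := hh (ε := ε / 2 / (|K| + 1)) (by positivity)
  obtain ⟨w, hw⟩ := hk (ε := ε / 2 / (‖v‖ + 1)) (by positivity)
  refine ⟨v * w, fun μ => ?_⟩
  have hsplit : v * w - algebraMap ℝ C(X, ℝ) ((h * k) μ) =
      v * (w - algebraMap ℝ _ (k μ)) + k μ • (v - algebraMap ℝ _ (h μ)) := by
    rw [Pi.mul_apply, map_mul, Algebra.smul_def]
    ring
  have hfst : ‖v‖ * l1Seminorm (μ : Measure X) (w - algebraMap ℝ _ (k μ)) < ε / 2 := by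
    nlinarith [(lt_div_iff₀ (by positivity)).1 (hw μ), norm_nonneg v,
      apply_nonneg (l1Seminorm (μ : Measure X)) (w - algebraMap ℝ _ (k μ))]
  have hsnd : |k μ| * l1Seminorm (μ : Measure X) (v - algebraMap ℝ _ (h μ)) < ε / 2 := by
    nlinarith [(lt_div_iff₀ (by positivity)).1 (hv μ), hK μ, le_abs_self K,
      apply_nonneg (l1Seminorm (μ : Measure X)) (v - algebraMap ℝ _ (h μ))]
  calc l1Seminorm (μ : Measure X) (v * w - algebraMap ℝ _ ((h * k) μ))
      ≤ l1Seminorm (μ : Measure X) (v * (w - algebraMap ℝ _ (k μ))) +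
          l1Seminorm (μ : Measure X) (k μ • (v - algebraMap ℝ _ (h μ))) :=
        hsplit ▸ map_add_le_add _ _ _
    _ ≤ ‖v‖ * l1Seminorm (μ : Measure X) (w - algebraMap ℝ _ (k μ)) +
          |k μ| * l1Seminorm (μ : Measure X) (v - algebraMap ℝ _ (h μ)) :=
        add_le_add (l1Seminorm_mul_le _ _ _) (map_smul_eq_mul _ _ _).le
    _ < ε := by linarith

theorem of_forall_exists_abs_sub_le {h : E → ℝ}
    (hh : ∀ ε > 0, ∃ k, IsL1Approximable k ∧ ∀ μ, |k μ - h μ| < ε) : IsL1Approximable h := by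
  intro ε hε
  obtain ⟨k, hk, hkh⟩ := hh (ε / 2) (half_pos hε)
  obtain ⟨v, hv⟩ := hk (half_pos hε)
  refine ⟨v, fun μ => ?_⟩
  calc l1Seminorm (μ : Measure X) (v - algebraMap ℝ _ (h μ))
      ≤ l1Seminorm (μ : Measure X) (v - algebraMap ℝ _ (k μ)) + |k μ - h μ| :=
        l1Seminorm_sub_algebraMap_le _ v _ _
    _ < ε := by linarith [hv μ, hkh μ]

end IsL1Approximable

variable (E) in
/-- The `L¹`-approximable continuous functions on `E`, as a subalgebra. -/
def l1ApproximableSubalgebra [CompactSpace E] : Subalgebra ℝ C(E, ℝ) where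
  carrier := {h | IsL1Approximable h}
  algebraMap_mem' := IsL1Approximable.const
  add_mem' := IsL1Approximable.add
  mul_mem' {_ k} hh hk := hh.mul hk k.norm_coe_le_norm

theorem isClosed_l1ApproximableSubalgebra [CompactSpace E] :
    IsClosed (l1ApproximableSubalgebra E : Set C(E, ℝ)) := by
  refine isClosed_of_closure_subset fun h hh => ?_
  refine IsL1Approximable.of_forall_exists_abs_sub_le fun ε hε => ?_
  obtain ⟨k, hk, hdist⟩ := Metric.mem_closure_iff.1 hh ε hε
  refine ⟨k, hk, fun μ => ?_⟩
  rw [← Real.dist_eq, dist_comm]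
  exact (ContinuousMap.dist_apply_le_dist μ).trans_lt hdist

/-- Stone–Weierstrass: integrals of continuous functions separate measures. -/
theorem isL1Approximable_of_forall_integral [HasOuterApproxClosed X] [CompactSpace E]
    (hE : ∀ f : C(X, ℝ), IsL1Approximable fun μ : E => ∫ x, f x ∂(μ : Measure X)) (h : C(E, ℝ)) :
    IsL1Approximable h := by
  let A := l1ApproximableSubalgebra E
  let integralMap (f : C(X, ℝ)) : C(E, ℝ) :=
    ⟨fun μ => ∫ x, f x ∂(μ : Measure X),
      (ProbabilityMeasure.continuous_integral_continuousMap f).comp continuous_subtype_val⟩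
  have hsep : A.SeparatesPoints := by
    intro μ ν hμν
    by_contra! hA
    refine hμν (Subtype.ext (ProbabilityMeasure.toMeasure_injective ?_))
    exact ext_of_forall_integral_eq_of_IsFiniteMeasure fun f =>
      hA _ ⟨integralMap f.toContinuousMap, hE f.toContinuousMap, rfl⟩
  have htop : A = ⊤ := top_le_iff.1 <|
    (ContinuousMap.subalgebra_topologicalClosure_eq_top_of_separatesPoints A hsep).ge.trans
      (A.topologicalClosure_minimal le_rfl isClosed_l1ApproximableSubalgebra)
  exact htop.ge (Algebra.mem_top (x := h))

end L1Approximable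

section ZeroDimensional

open TopologicalSpace

theorem exists_locallyConstant_forall_of_forall_exists_eventually {E Y : Type*} [TopologicalSpace E]
    [CompactSpace E] [T2Space E] [TotallyDisconnectedSpace E] {P : E → Y → Prop}
    (hP : ∀ x, ∃ y, ∀ᶠ x' in nhds x, P x' y) : ∃ r : LocallyConstant E Y, ∀ x, P x (r x) := by
  choose y hy using hP
  let U (x : E) : Opens E := Opens.interior {x' | P x' (y x)}
  have hU : IsOpenCover U := .mk <| Opens.ext <| by
    simpa [eq_univ_iff_forall, U] using fun x => ⟨x, mem_interior_iff_mem_nhds.2 (hy x)⟩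
  obtain ⟨n, W, hWU, hW, hdisj⟩ := hU.exists_finite_nonempty_disjoint_clopen_cover
  choose i hi using fun j => (hWU j).2
  choose j hj using fun x => mem_iUnion.1 (hW (mem_univ x))
  refine ⟨⟨fun x => y (i (j x)), (IsLocallyConstant.iff_eventually_eq _).2 fun x => ?_⟩,
    fun x => interior_subset (s := {x' | P x' (y (i (j x)))}) (hi (j x) (hj x))⟩
  filter_upwards [(W (j x)).isClopen.isOpen.mem_nhds (hj x)] with x' hx'
  have hjx : j x' = j x := by
    by_contra hne
    exact disjoint_left.1 (Clopens.coe_disjoint.2 (hdisj hne)) (hj x') hx'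
  rw [hjx]

end ZeroDimensional

section LevelSets

theorem exists_mem_Ioo_eventually_measure_abs_sub_le_lt {α : Type*} [MeasurableSpace α]
    (μ : Measure α) [IsFiniteMeasure μ] {f : α → ℝ} (hf : Measurable f) {a b : ℝ} (hab : a < b)
    {ε : ENNReal} (hε : 0 < ε) :
    ∃ t ∈ Ioo a b, ∀ᶠ η in nhds (0 : ℝ), μ {x | |f x - t| ≤ η} < ε := by
  obtain ⟨t, ht, htab⟩ := ((Measure.countable_meas_level_set_pos (μ := μ) hf).dense_compl
    ℝ).exists_mem_open isOpen_Ioo (nonempty_Ioo.2 hab)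
  have ht0 : μ.map f {t} = 0 := by
    rw [Measure.map_apply hf (measurableSet_singleton t)]
    exact nonpos_iff_eq_zero.1 (not_lt.1 ht)
  have hlim := tendsto_measure_cthickening_of_isClosed (μ := μ.map f) (s := {t})
    ⟨1, one_pos, measure_ne_top _ _⟩ isClosed_singleton
  rw [ht0] at hlim
  refine ⟨t, htab, (hlim.eventually (gt_mem_nhds hε)).mono fun η hη => ?_⟩
  rw [Measure.map_apply hf Metric.isClosed_cthickening.measurableSet] at hη
  have hsub : {x | |f x - t| ≤ η} ⊆ f ⁻¹' Metric.cthickening η {t} := fun x hx =>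
    Metric.mem_cthickening_of_dist_le (f x) t η {t} rfl hx
  exact (measure_mono hsub).trans_lt hη

variable {X : Type*} [TopologicalSpace X] [MeasurableSpace X] [OpensMeasurableSpace X]
  [HasOuterApproxClosed X]

theorem upperSemicontinuous_measure_of_isClosed {C : Set X} (hC : IsClosed C) :
    UpperSemicontinuous fun μ : ProbabilityMeasure X => (μ : Measure X) C :=
  upperSemicontinuous_iff_limsup_le.2 fun _ =>
    ProbabilityMeasure.limsup_measure_closed_le_of_tendsto Filter.tendsto_id hC

theorem exists_continuousMap_eventually_measure_abs_sub_le_lt {E : Set (ProbabilityMeasure X)}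
    [CompactSpace E] [TotallyDisconnectedSpace E] (f : C(X, ℝ)) {a b : ℝ} (hab : a < b)
    {ε : ENNReal} (hε : 0 < ε) :
    ∃ t : C(E, ℝ), (∀ μ, t μ ∈ Ioo a b) ∧
      ∀ᶠ η in nhds (0 : ℝ), ∀ μ : E, (μ : Measure X) {x | |f x - t μ| ≤ η} < ε := by
  have hlocal (μ : E) : ∃ tη : ℝ × ℝ, ∀ᶠ ν : E in nhds μ,
      tη.1 ∈ Ioo a b ∧ 0 < tη.2 ∧ (ν : Measure X) {x | |f x - tη.1| ≤ tη.2} < ε := by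
    obtain ⟨t, ht, hlim⟩ := exists_mem_Ioo_eventually_measure_abs_sub_le_lt (μ : Measure X)
      f.continuous.measurable hab hε
    obtain ⟨η, hη0, hη⟩ := hlim.exists_gt
    have hclosed : IsClosed {x | |f x - t| ≤ η} := isClosed_le (by fun_prop) continuous_const
    refine ⟨(t, η), ?_⟩
    filter_upwards [continuous_subtype_val.continuousAt.eventually
      (upperSemicontinuous_measure_of_isClosed hclosed μ ε hη)] with ν hν
    exact ⟨ht, hη0, hν⟩
  obtain ⟨r, hr⟩ := exists_locallyConstant_forall_of_forall_exists_eventually hlocal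
  obtain ⟨η₀, hη₀, hle⟩ := isCompact_univ.exists_forall_le' (f := fun μ => (r μ).2)
    (continuous_snd.comp r.continuous).continuousOn fun μ _ => (hr μ).2.1
  refine ⟨⟨fun μ => (r μ).1, continuous_fst.comp r.continuous⟩, fun μ => (hr μ).1, ?_⟩
  filter_upwards [gt_mem_nhds hη₀] with η hη μ
  exact (measure_mono fun x hx => hx.out.trans (hη.le.trans (hle μ trivial))).trans_lt (hr μ).2.2

end LevelSets

section NestedSequences

variable {X : Type*} {F U : ℕ → Set X}

theorem iUnion_subset_of_monotone_of_antitone (hF : Monotone F) (hU : Antitone U)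
    (hFU : ∀ n, F n ⊆ U n) (n : ℕ) : ⋃ m, F m ⊆ U n :=
  iUnion_subset fun m =>
    (hF (le_max_left m n)).trans ((hFU _).trans (hU (le_max_right m n)))

variable [TopologicalSpace X]

theorem isOpen_iUnion_of_subset_interior_succ (hF : ∀ n, F n ⊆ interior (F (n + 1))) :
    IsOpen (⋃ n, F n) := by
  refine isOpen_iff_mem_nhds.2 fun x hx => ?_
  obtain ⟨n, hn⟩ := mem_iUnion.1 hx
  exact Filter.mem_of_superset (mem_interior_iff_mem_nhds.1 (hF n hn)) (subset_iUnion F (n + 1))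

theorem frontier_iUnion_subset_sdiff (hF : ∀ n, F n ⊆ interior (F (n + 1)))
    (hU : ∀ n, closure (U (n + 1)) ⊆ U n) (hFU : ∀ n, F n ⊆ U n) (n : ℕ) :
    frontier (⋃ m, F m) ⊆ U n \ F n := by
  have hsub := iUnion_subset_of_monotone_of_antitone
    (monotone_nat_of_le_succ fun n => (hF n).trans interior_subset)
    (antitone_nat_of_succ_le fun n => subset_closure.trans (hU n)) hFU (n + 1)
  rw [(isOpen_iUnion_of_subset_interior_succ hF).frontier_eq]
  exact sdiff_subset_sdiff ((closure_mono hsub).trans (hU n)) (subset_iUnion F n)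

end NestedSequences

section Collars

variable {X : Type*} [TopologicalSpace X]

/-- A set of measures has thin collars if every closed set `F` inside an open set `U` can be
separated from the complement of `U` by a collar `U' \ F'` of uniformly small measure. -/
def HasThinCollars [MeasurableSpace X] (M : Set (Measure X)) : Prop :=
  ∀ ⦃F U : Set X⦄, IsClosed F → IsOpen U → F ⊆ U → ∀ ⦃ε : ENNReal⦄, 0 < ε →
    ∃ F' U' : Set X, IsClosed F' ∧ IsOpen U' ∧ F ⊆ interior F' ∧ F' ⊆ U' ∧ closure U' ⊆ U ∧
      ∀ μ ∈ M, μ (U' \ F') < ε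

variable [MeasurableSpace X] {M : Set (Measure X)} {F U : Set X}

theorem HasThinCollars.exists_isOpen_measure_frontier_eq_zero (hM : HasThinCollars M)
    (hF : IsClosed F) (hU : IsOpen U) (hFU : F ⊆ U) :
    ∃ V, IsOpen V ∧ F ⊆ V ∧ V ⊆ U ∧ ∀ μ ∈ M, μ (frontier V) = 0 := by
  let P := {p : Set X × Set X // IsClosed p.1 ∧ IsOpen p.2 ∧ p.1 ⊆ p.2}
  have hstep (n : ℕ) (p : P) : ∃ q : P, p.1.1 ⊆ interior q.1.1 ∧ closure q.1.2 ⊆ p.1.2 ∧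
      ∀ μ ∈ M, μ (q.1.2 \ q.1.1) < (n : ENNReal)⁻¹ := by
    obtain ⟨F', U', hF', hU', hFF', hFU', hUU', hμ⟩ := hM p.2.1 p.2.2.1 p.2.2.2
      (ENNReal.inv_pos.2 (ENNReal.natCast_ne_top n))
    exact ⟨⟨(F', U'), hF', hU', hFU'⟩, hFF', hUU', hμ⟩
  choose next hnextF hnextU hnextμ using hstep
  let s (n : ℕ) : P := Nat.rec ⟨(F, U), hF, hU, hFU⟩ next n
  have hsF (n : ℕ) : (s n).1.1 ⊆ interior (s (n + 1)).1.1 := hnextF n (s n)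
  have hsU (n : ℕ) : closure (s (n + 1)).1.2 ⊆ (s n).1.2 := hnextU n (s n)
  have hsFU (n : ℕ) : (s n).1.1 ⊆ (s n).1.2 := (s n).2.2.2
  refine ⟨⋃ n, (s n).1.1, isOpen_iUnion_of_subset_interior_succ hsF,
    subset_iUnion (fun n => (s n).1.1) 0, ?_, fun μ hμ => ?_⟩
  · exact iUnion_subset_of_monotone_of_antitone
      (monotone_nat_of_le_succ fun n => (hsF n).trans interior_subset)
      (antitone_nat_of_succ_le fun n => subset_closure.trans (hsU n)) hsFU 0
  · refine le_antisymm (ge_of_tendsto' ENNReal.tendsto_inv_nat_nhds_zero fun n => ?_) bot_le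
    have hsub := frontier_iUnion_subset_sdiff hsF hsU hsFU (n + 1)
    exact (measure_mono hsub).trans (hnextμ n (s n) μ hμ).le

end Collars

section ErgodicCollars

variable {X : Type*} [TopologicalSpace X] [CompactSpace X] [MeasurableSpace X] [BorelSpace X]
  {E : Set (ProbabilityMeasure X)}

theorem IsL1Approximable.exists_mem_Icc_measure_le_abs_sub_lt {h : E → ℝ} (hh : IsL1Approximable h)
    {a b : ℝ} (hab : a ≤ b) (hmem : ∀ μ, h μ ∈ Icc a b) {δ : ℝ} (hδ : 0 < δ) {ε : ENNReal}
    (hε : 0 < ε) :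
    ∃ v : C(X, ℝ), (∀ x, v x ∈ Icc a b) ∧
      ∀ μ : E, (μ : Measure X) {x | δ ≤ |v x - h μ|} < ε := by
  obtain ⟨r, -, hr, hrε⟩ := ENNReal.lt_iff_exists_real_btwn.1 hε
  have hr0 : 0 < r := ENNReal.ofReal_pos.1 hr
  obtain ⟨w, hw⟩ := hh (mul_pos hδ hr0)
  refine ⟨⟨fun x => projIcc a b hab (w x), by fun_prop⟩, fun x => (projIcc a b hab (w x)).2,
    fun μ => lt_of_le_of_lt ?_ hrε⟩
  have hsub : {x | δ ≤ |(projIcc a b hab (w x) : ℝ) - h μ|} ⊆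
      {x | δ ≤ |(w - algebraMap ℝ _ (h μ)) x|} := by
    intro x (hx : δ ≤ _)
    refine hx.trans ?_
    simpa [projIcc_of_mem hab (hmem μ)] using abs_projIcc_sub_projIcc hab (c := w x) (d := h μ)
  have hreal := lt_of_mul_lt_mul_left
    ((mul_measureReal_le_abs_le_l1Seminorm (μ : Measure X) _ δ).trans_lt (hw μ)) hδ.le
  exact (measure_mono hsub).trans
    ((ENNReal.le_ofReal_iff_toReal_le (measure_ne_top _ _) hr0.le).2 hreal.le)

theorem hasThinCollars_of_forall_integral [NormalSpace X] [HasOuterApproxClosed X] [CompactSpace E]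
    [TotallyDisconnectedSpace E]
    (hE : ∀ f : C(X, ℝ), IsL1Approximable fun μ : E => ∫ x, f x ∂(μ : Measure X)) :
    HasThinCollars ((fun μ : ProbabilityMeasure X => (μ : Measure X)) '' E) := by
  intro F U hF hU hFU ε hε
  obtain ⟨f, hf0, hf1, -⟩ := exists_continuous_zero_one_of_isClosed hF hU.isClosed_compl
    (disjoint_compl_right_iff_subset.2 hFU)
  obtain ⟨t, ht, htε⟩ := exists_continuousMap_eventually_measure_abs_sub_le_lt (E := E) f
    (a := 1 / 3) (b := 2 / 3) (by norm_num) (ENNReal.half_pos hε.ne')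
  obtain ⟨η, hη, htη, hη3⟩ := (htε.and (gt_mem_nhds (show (0 : ℝ) < 2 / 3 by norm_num))).exists_gt
  obtain ⟨v, hv, hvε⟩ := (isL1Approximable_of_forall_integral hE
    t).exists_mem_Icc_measure_le_abs_sub_lt (by norm_num) (fun μ => Ioo_subset_Icc_self (ht μ))
    (half_pos hη) (ENNReal.half_pos hε.ne')
  refine ⟨{x | f x ≤ v x - η / 2}, {x | f x < v x + η / 2},
    isClosed_le (by fun_prop) (by fun_prop), isOpen_lt (by fun_prop) (by fun_prop),
    fun x hx => ?_, fun x hx => ?_, fun x hx => ?_, ?_⟩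
  · refine lt_subset_interior_le (by fun_prop) (by fun_prop) ?_
    rw [mem_ofPred_eq, hf0 hx, Pi.zero_apply]
    linarith [(hv x).1]
  · exact hx.out.trans_lt (by linarith)
  · by_contra hxU
    have hfv : f x ≤ v x + η / 2 := closure_lt_subset_le (by fun_prop) (by fun_prop) hx
    rw [hf1 hxU, Pi.one_apply] at hfv
    linarith [(hv x).2]
  · rintro _ ⟨μ, hμ, rfl⟩
    have hsub : {x | f x < v x + η / 2} \ {x | f x ≤ v x - η / 2} ⊆
        {x | |f x - t ⟨μ, hμ⟩| ≤ η} ∪ {x | η / 2 ≤ |v x - t ⟨μ, hμ⟩|} := by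
      rintro x ⟨hlt, hle⟩
      simp only [mem_ofPred_eq, not_le, mem_union, abs_le, le_abs] at hlt hle ⊢
      grind
    calc (μ : Measure X) ({x | f x < v x + η / 2} \ {x | f x ≤ v x - η / 2})
        ≤ (μ : Measure X) {x | |f x - t ⟨μ, hμ⟩| ≤ η} +
            (μ : Measure X) {x | η / 2 ≤ |v x - t ⟨μ, hμ⟩|} :=
          (measure_mono hsub).trans (measure_union_le _ _)
      _ < ε / 2 + ε / 2 := ENNReal.add_lt_add (htη ⟨μ, hμ⟩) (hvε ⟨μ, hμ⟩)
      _ = ε := ENNReal.add_halves ε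

end ErgodicCollars

section Decomposition

variable {X : Type*} [TopologicalSpace X] [MeasurableSpace X]

/-- A probability measure viewed as the functional `f ↦ ∫ f dμ`, which places the affine notions
for measures (segments, extreme points) in a locally convex space. -/
noncomputable def integralFunctional (μ : ProbabilityMeasure X) : C(X, ℝ) → ℝ :=
  fun f => ∫ x, f x ∂(μ : Measure X)

variable [BorelSpace X]

theorem continuous_integralFunctional [CompactSpace X] :
    Continuous (integralFunctional (X := X)) :=
  continuous_pi fun f => ProbabilityMeasure.continuous_integral_continuousMap f

variable [HasOuterApproxClosed X]

theorem integralFunctional_injective : Function.Injective (integralFunctional (X := X)) :=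
  fun _ _ h => ProbabilityMeasure.toMeasure_injective <|
    ext_of_forall_integral_eq_of_IsFiniteMeasure fun f => congrFun h f.toContinuousMap

variable [CompactSpace X]

theorem integralFunctional_mem_openSegment_iff {μ μ₁ μ₂ : ProbabilityMeasure X} :
    integralFunctional μ ∈
        openSegment ℝ (integralFunctional μ₁) (integralFunctional μ₂) ↔
      ∃ a b : NNReal, 0 < a ∧ 0 < b ∧ a + b = 1 ∧
        (μ : Measure X) = a • (μ₁ : Measure X) + b • (μ₂ : Measure X) := by
  have hint (a b : NNReal) (f : C(X, ℝ)) :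
      ∫ x, f x ∂(a • (μ₁ : Measure X) + b • (μ₂ : Measure X)) =
        a * ∫ x, f x ∂(μ₁ : Measure X) + b * ∫ x, f x ∂(μ₂ : Measure X) := by
    rw [integral_add_measure (integrable_continuousMap _ f) (integrable_continuousMap _ f),
      integral_smul_nnreal_measure, integral_smul_nnreal_measure]
    rfl
  constructor
  · rintro ⟨a, b, ha, hb, hab, h⟩
    lift a to NNReal using ha.le
    lift b to NNReal using hb.le
    refine ⟨a, b, mod_cast ha, mod_cast hb, mod_cast hab, ?_⟩
    refine ext_of_forall_integral_eq_of_IsFiniteMeasure fun f => ?_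
    exact (congrFun h f.toContinuousMap).symm.trans (hint a b f.toContinuousMap).symm
  · rintro ⟨a, b, ha, hb, hab, h⟩
    refine ⟨a, b, mod_cast ha, mod_cast hb, mod_cast hab, funext fun f => ?_⟩
    exact (hint a b f).symm.trans (by rw [integralFunctional, h])

theorem isExtreme_integralFunctional_image_measure_le {M : Set (ProbabilityMeasure X)} {C : Set X}
    {m : ENNReal} (hm : ∀ μ ∈ M, (μ : Measure X) C ≤ m) :
    IsExtreme ℝ (integralFunctional '' M)
      (integralFunctional '' {μ ∈ M | m ≤ (μ : Measure X) C}) := by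
  refine ⟨image_mono (sep_subset _ _), ?_⟩
  rintro _ ⟨μ₁, hμ₁, rfl⟩ _ ⟨μ₂, hμ₂, rfl⟩ _ ⟨μ, ⟨-, hμ⟩, rfl⟩ hseg
  obtain ⟨a, b, ha, -, hab, h⟩ := integralFunctional_mem_openSegment_iff.1 hseg
  refine ⟨μ₁, ⟨hμ₁, ?_⟩, rfl⟩
  have hab' : (a : ENNReal) + b = 1 := mod_cast hab
  by_contra! hlt
  refine lt_irrefl m ?_
  calc m ≤ a * (μ₁ : Measure X) C + b * (μ₂ : Measure X) C := by simpa [h] using hμ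
    _ < a * m + b * m := ENNReal.add_lt_add_of_lt_of_le
        (ENNReal.mul_ne_top ENNReal.coe_ne_top (measure_ne_top _ _))
        (ENNReal.mul_lt_mul_right (mod_cast ha.ne') ENNReal.coe_ne_top hlt)
        (mul_le_mul_right (hm μ₂ hμ₂) _)
    _ = m := by rw [← add_mul, hab', one_mul]

theorem exists_mem_extremePoints_measure_le {M : Set (ProbabilityMeasure X)} (hM : IsCompact M)
    {C : Set X} (hC : IsClosed C) {ν : ProbabilityMeasure X} (hν : ν ∈ M) :
    ∃ μ ∈ M, integralFunctional μ ∈ (integralFunctional '' M).extremePoints ℝ ∧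
      (ν : Measure X) C ≤ (μ : Measure X) C := by
  have husc := upperSemicontinuous_measure_of_isClosed hC
  obtain ⟨μ₀, hμ₀, hmax⟩ := (husc.upperSemicontinuousOn M).exists_isMaxOn ⟨ν, hν⟩ hM
  have hface : IsCompact {μ ∈ M | (μ₀ : Measure X) C ≤ (μ : Measure X) C} :=
    hM.inter_right (husc.isClosed_preimage _)
  obtain ⟨_, hext⟩ := (hface.image continuous_integralFunctional).extremePoints_nonempty
    ⟨_, μ₀, ⟨hμ₀, le_rfl⟩, rfl⟩
  obtain ⟨μ, ⟨hμ, hμC⟩, rfl⟩ := hext.1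
  refine ⟨μ, hμ, ?_, (hmax hν).trans hμC⟩
  exact (isExtreme_integralFunctional_image_measure_le hmax).extremePoints_subset_extremePoints hext

end Decomposition

section Cond

variable {α : Type*} [MeasurableSpace α] {μ : Measure α} {A : Set α}

open scoped ProbabilityTheory

theorem measurePreserving_cond {f : α → α} (hf : MeasurePreserving f μ μ) (hA : MeasurableSet A)
    (hfA : f ⁻¹' A = A) : MeasurePreserving f μ[|A] μ[|A] := by
  have hrestrict := hf.restrict_preimage hA
  rw [hfA] at hrestrict
  exact hrestrict.smul_measure _

theorem eq_smul_cond_add_smul_cond_compl [IsFiniteMeasure μ] (hA : MeasurableSet A) :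
    μ = μ A • μ[|A] + μ Aᶜ • μ[|Aᶜ] := by
  ext s
  simpa [mul_comm] using (ProbabilityTheory.cond_add_cond_compl_eq (t := s) hA μ).symm

end Cond

section MG

variable {G X : Type*} [Group G] [MetricSpace X] [MeasurableSpace X] [BorelSpace X]
  [MulAction G X] [ContinuousConstSMul G X]

theorem exists_mem_MG_eq_cond {μ : ProbabilityMeasure X} (hμ : μ ∈ MG G X) {A : Set X}
    (hA : MeasurableSet A) (hinv : ∀ g : G, g • A = A) (hμA : μ A ≠ 0) :
    ∃ ν ∈ MG G X, (ν : Measure X) = ProbabilityTheory.cond (μ : Measure X) A := by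
  have := ProbabilityTheory.cond_isProbabilityMeasure (mt (μ.null_iff_toMeasure_null A).2 hμA)
  refine ⟨⟨_, this⟩, fun g => ?_, rfl⟩
  have hg : MeasurePreserving (g • ·) (μ : Measure X) μ :=
    ⟨(continuous_const_smul g).measurable, hμ g⟩
  exact (measurePreserving_cond hg hA (by rw [preimage_smul, hinv])).map_eq

variable [CompactSpace X]

variable (G X) in
theorem isCompact_MG : IsCompact (MG G X) := by
  have hset : MG G X = ⋂ g : G,
      {μ | μ.map (continuous_const_smul g).measurable.aemeasurable = μ} := by
    ext μ
    rw [mem_iInter]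
    exact forall_congr' fun g => ProbabilityMeasure.toMeasure_injective.eq_iff
      (a := μ.map (continuous_const_smul g).measurable.aemeasurable)
  rw [hset]
  exact (isClosed_iInter fun g => isClosed_eq
    (ProbabilityMeasure.continuous_map (continuous_const_smul g)) continuous_id).isCompact

theorem mem_EG_of_mem_extremePoints {μ : ProbabilityMeasure X} (hμ : μ ∈ MG G X)
    (hext : integralFunctional μ ∈ (integralFunctional '' MG G X).extremePoints ℝ) :
    μ ∈ EG G X := by
  refine ⟨hμ, fun A hA hinv => ?_⟩
  by_contra! hne
  have hadd : μ A + μ Aᶜ = 1 := by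
    apply ENNReal.coe_injective
    simpa using prob_add_prob_compl (μ := (μ : Measure X)) hA
  have hAc : μ Aᶜ ≠ 0 := fun h => hne.2 (by simpa [h] using hadd)
  obtain ⟨μ₁, hμ₁, hμ₁A⟩ := exists_mem_MG_eq_cond hμ hA hinv hne.1
  obtain ⟨μ₂, hμ₂, hμ₂A⟩ := exists_mem_MG_eq_cond hμ hA.compl
    (fun g => by rw [smul_set_compl, hinv]) hAc
  have hμ₁μ : μ₁ = μ := integralFunctional_injective <|
    hext.2 (mem_image_of_mem _ hμ₁) (mem_image_of_mem _ hμ₂) <|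
      integralFunctional_mem_openSegment_iff.2 ⟨μ A, μ Aᶜ, pos_iff_ne_zero.2 hne.1,
        pos_iff_ne_zero.2 hAc, hadd, by
          rw [hμ₁A, hμ₂A]
          simpa [ENNReal.smul_def] using eq_smul_cond_add_smul_cond_compl (μ := (μ : Measure X)) hA⟩
  refine hne.2 (ENNReal.coe_injective ?_)
  rw [← hμ₁μ, ProbabilityMeasure.ennreal_coeFn_eq_coeFn_toMeasure, hμ₁A, ENNReal.coe_one]
  exact ProbabilityTheory.cond_apply_self (mt (μ.null_iff_toMeasure_null A).2 hne.1)
    (measure_ne_top _ _)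

theorem exists_mem_EG_measure_le {C : Set X} (hC : IsClosed C) {ν : ProbabilityMeasure X}
    (hν : ν ∈ MG G X) : ∃ μ ∈ EG G X, (ν : Measure X) C ≤ (μ : Measure X) C := by
  obtain ⟨μ, hμ, hext, hle⟩ := exists_mem_extremePoints_measure_le (isCompact_MG G X) hC hν
  exact ⟨μ, mem_EG_of_mem_extremePoints hμ hext, hle⟩

end MG

theorem smallBoundaryProperty_of_compact_totallyDisconnected_ergodic_general
    {G X : Type*} [Group G] [Countable G] [MetricSpace X] [CompactSpace X]
    [MeasurableSpace X] [BorelSpace X] [MulAction G X] [ContinuousConstSMul G X]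
    (hcpt : IsCompact (EG G X)) (hzd : IsTotallyDisconnected (EG G X)) :
    SmallBoundaryProperty G X := by
  have : CompactSpace (EG G X) := isCompact_iff_compactSpace.1 hcpt
  have : TotallyDisconnectedSpace (EG G X) := totallyDisconnectedSpace_subtype_iff.2 hzd
  have hcollars := hasThinCollars_of_forall_integral (E := EG G X) fun f ε hε => by
    obtain ⟨u, hu⟩ := exists_forall_l1Seminorm_sub_integral_lt hcpt
      (fun μ hμ => ergodicSMul_of_mem_EG hμ) f hε
    exact ⟨u, fun μ => hu μ μ.2⟩
  intro x U hU hxU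
  obtain ⟨V, hV, hxV, hVU, hnull⟩ := hcollars.exists_isOpen_measure_frontier_eq_zero
    isClosed_singleton hU (singleton_subset_iff.2 hxU)
  refine ⟨V, hV, singleton_subset_iff.1 hxV, hVU, fun ν hν => ?_⟩
  obtain ⟨μ, hμ, hle⟩ := exists_mem_EG_measure_le isClosed_frontier hν
  exact (ν.null_iff_toMeasure_null _).2
    (le_antisymm (hle.trans_eq (hnull μ (mem_image_of_mem _ hμ))) bot_le)

/-- If `G` is a countably infinite discrete amenable group acting minimally and
freely on an infinite compact metrizable space `X`, and `E_G(X)` is compact and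
zero-dimensional in the weak* topology, then the action has the small boundary property. -/
theorem smallBoundaryProperty_of_compact_totallyDisconnected_ergodic
    {G X : Type*} [Group G] [Countable G] [Infinite G]
    [MetricSpace X] [CompactSpace X] [Infinite X]
    [MeasurableSpace X] [BorelSpace X]
    [MulAction G X] [ContinuousConstSMul G X]
    (hG : AmenableGroup G)
    (hfree : FreeAction G X) (hmin : MinimalAction G X)
    (hcpt : IsCompact (EG G X)) (hzd : IsTotallyDisconnected (EG G X)) :
    SmallBoundaryProperty G X :=
  smallBoundaryProperty_of_compact_totallyDisconnected_ergodic_general hcpt hzd
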